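/- arXiv:1412.6461 — 2 statements merged into one kernel-verified Lean document; each statement's English description precedes it below -/
import Mathlib

section
/- Let u : ℝ³ → ℝ be a smooth solution of the 3D rdDym equation u_ty = u_x·u_xy − u_y·u_xx (coordinates (t,x,y), subscripts denoting partial derivatives). Then the function φ := u_t − x·u_x − u_y + 2u satisfies the linearized equation φ_ty = u_x·φ_xy + u_xy·φ_x − u_y·φ_xx − u_xx·φ_y at every point of ℝ³ (i.e., φ is a symmetry of the 3D rdDym equation). -/
/-- Partial derivative of a function on `ℝ³` in the direction `v`. -/
noncomputable def pd (v : ℝ × ℝ × ℝ) (f : ℝ × ℝ × ℝ → ℝ) : ℝ × ℝ × ℝ → ℝ :=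
  fun p => fderiv ℝ f p v

/-- Coordinates are `(t, x, y)`. -/
noncomputable def dt : (ℝ × ℝ × ℝ → ℝ) → ℝ × ℝ × ℝ → ℝ := pd (1, 0, 0)
noncomputable def dx : (ℝ × ℝ × ℝ → ℝ) → ℝ × ℝ × ℝ → ℝ := pd (0, 1, 0)
noncomputable def dy : (ℝ × ℝ × ℝ → ℝ) → ℝ × ℝ × ℝ → ℝ := pd (0, 0, 1)

/-- The symmetry `φ = u_t − x·u_x − u_y + 2u` of the 3D rdDym equation. -/
noncomputable def phi (u : ℝ × ℝ × ℝ → ℝ) : ℝ × ℝ × ℝ → ℝ :=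
  fun p => dt u p - p.2.1 * dx u p - dy u p + 2 * u p

/-- Smooth functions on `ℝ³`. -/
def Sm (f : ℝ × ℝ × ℝ → ℝ) : Prop := ContDiff ℝ (⊤ : ℕ∞) f

theorem Sm.diff {f : ℝ × ℝ × ℝ → ℝ} (hf : Sm f) : Differentiable ℝ f :=
  ContDiff.differentiable hf (by simp)

theorem Sm.pd {f : ℝ × ℝ × ℝ → ℝ} (hf : Sm f) (v : ℝ × ℝ × ℝ) : Sm (pd v f) := by
  unfold Sm at *
  unfold _root_.pd
  exact (hf.fderiv_right (m := (⊤ : ℕ∞)) (by simp)).clm_apply contDiff_const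

theorem Sm.sub {f g : ℝ × ℝ × ℝ → ℝ} (hf : Sm f) (hg : Sm g) : Sm (fun p => f p - g p) :=
  ContDiff.sub hf hg

theorem Sm.add {f g : ℝ × ℝ × ℝ → ℝ} (hf : Sm f) (hg : Sm g) : Sm (fun p => f p + g p) :=
  ContDiff.add hf hg

theorem Sm.mul {f g : ℝ × ℝ × ℝ → ℝ} (hf : Sm f) (hg : Sm g) : Sm (fun p => f p * g p) :=
  ContDiff.mul hf hg

theorem Sm.const (c : ℝ) : Sm (fun _ => c) := contDiff_const

theorem Sm.x : Sm (fun p => p.2.1) := by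
  unfold Sm
  fun_prop

theorem pd_sub (v : ℝ × ℝ × ℝ) {f g : ℝ × ℝ × ℝ → ℝ} (hf : Sm f) (hg : Sm g) :
    pd v (fun p => f p - g p) = fun p => pd v f p - pd v g p := by
  funext p
  simp only [pd]
  rw [fderiv_fun_sub (hf.diff p) (hg.diff p)]
  simp

theorem pd_add (v : ℝ × ℝ × ℝ) {f g : ℝ × ℝ × ℝ → ℝ} (hf : Sm f) (hg : Sm g) :
    pd v (fun p => f p + g p) = fun p => pd v f p + pd v g p := by
  funext p
  simp only [pd]
  rw [fderiv_fun_add (hf.diff p) (hg.diff p)]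
  simp

theorem pd_mul (v : ℝ × ℝ × ℝ) {f g : ℝ × ℝ × ℝ → ℝ} (hf : Sm f) (hg : Sm g) :
    pd v (fun p => f p * g p) = fun p => f p * pd v g p + g p * pd v f p := by
  funext p
  simp only [pd]
  rw [fderiv_fun_mul (hf.diff p) (hg.diff p)]
  simp

theorem pd_const (v : ℝ × ℝ × ℝ) (c : ℝ) : pd v (fun _ => c) = fun _ => 0 := by
  funext p
  simp [pd]

theorem pd_x (v : ℝ × ℝ × ℝ) : pd v (fun p => p.2.1) = fun _ => v.2.1 := by
  funext p
  have h : HasFDerivAt (fun p : ℝ × ℝ × ℝ => p.2.1)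
      ((ContinuousLinearMap.fst ℝ ℝ ℝ).comp (ContinuousLinearMap.snd ℝ ℝ (ℝ × ℝ))) p :=
    ((ContinuousLinearMap.fst ℝ ℝ ℝ).comp
      (ContinuousLinearMap.snd ℝ ℝ (ℝ × ℝ))).hasFDerivAt
  simp [pd, h.fderiv]

theorem pd_comm (v w : ℝ × ℝ × ℝ) {f : ℝ × ℝ × ℝ → ℝ} (hf : Sm f) :
    pd v (pd w f) = pd w (pd v f) := by
  funext p
  have hd : DifferentiableAt ℝ (fderiv ℝ f) p :=
    (ContDiff.differentiable (ContDiff.fderiv_right (m := (⊤ : ℕ∞)) hf (by simp)) (by simp)) p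
  have key : ∀ a b : ℝ × ℝ × ℝ, pd a (pd b f) p = fderiv ℝ (fderiv ℝ f) p a b := by
    intro a b
    unfold pd
    rw [fderiv_clm_apply hd (by fun_prop)]
    simp
  rw [key, key]
  have hs : IsSymmSndFDerivAt ℝ f p :=
    (ContDiff.contDiffAt hf).isSymmSndFDerivAt
      (by simp only [minSmoothness_of_isRCLikeNormedField]; exact WithTop.coe_le_coe.2 (le_top : (2 : ℕ∞) ≤ ⊤))
  exact hs v w

/-- If `u` is a smooth solution of the 3D rdDym equation
`u_ty = u_x·u_xy − u_y·u_xx`, then `φ = u_t − x·u_x − u_y + 2u` satisfies the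
linearized equation `φ_ty = u_x·φ_xy + u_xy·φ_x − u_y·φ_xx − u_xx·φ_y`. -/
theorem rdDym_symmetry (u : ℝ × ℝ × ℝ → ℝ)
    (hu : ContDiff ℝ (⊤ : ℕ∞) u)
    (hsol : ∀ p : ℝ × ℝ × ℝ,
      dy (dt u) p = dx u p * dy (dx u) p - dy u p * dx (dx u) p) :
    ∀ p : ℝ × ℝ × ℝ,
      dy (dt (phi u)) p =
        dx u p * dy (dx (phi u)) p + dy (dx u) p * dx (phi u) p
          - dy u p * dx (dx (phi u)) p - dx (dx u) p * dy (phi u) p := by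
  have hs : Sm u := hu
  have hE : dy (dt u) = fun p => dx u p * dy (dx u) p - dy u p * dx (dx u) p := funext hsol
  unfold dt dx dy at *
  intro p
  have h1 := fun v => congrFun (congrArg (pd v) hE) p
  have ht := h1 (1, 0, 0)
  have hx := h1 (0, 1, 0)
  have hy := h1 (0, 0, 1)
  have h0 := hsol p
  clear h1 hE hsol
  have hphi : phi u = fun p => pd (1, 0, 0) u p - p.2.1 * pd (0, 1, 0) u p
      - pd (0, 0, 1) u p + 2 * u p := rfl
  have cxt := fun {f} (hf : Sm f) => pd_comm (1, 0, 0) (0, 1, 0) hf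
  have cyt := fun {f} (hf : Sm f) => pd_comm (1, 0, 0) (0, 0, 1) hf
  have cyx := fun {f} (hf : Sm f) => pd_comm (0, 1, 0) (0, 0, 1) hf
  rw [hphi]
  simp (maxDischargeDepth := 20) only [pd_sub, pd_add, pd_mul, pd_const, pd_x, Sm.sub, Sm.add, Sm.mul, Sm.const, Sm.x,
    Sm.pd, hs, cxt, cyt, cyx] at ht hx hy h0 ⊢
  linear_combination ht - p.2.1 * hx - hy + 2 * h0
end

section
/- Define D(x,y,p,q,w) := w² − (q+x)w + x·q − p − 2y and the rational functions X := −w(w−q)/D and Y := −w/D. Then for all real numbers x, y, p, q, s, t, w with D(x,y,p,q,w) ≠ 0, setting r := (x−q)·s + (2y+p)·t − q, the identity ∂X/∂y + (∂X/∂p)·s + (∂X/∂q)·t + (∂X/∂w)·Y = ∂Y/∂x + (∂Y/∂p)·r + (∂Y/∂q)·s + (∂Y/∂w)·X holds, all partial derivatives being taken at the point (x,y,p,q,w). (Here p,q,r,s,t stand for u_x,u_y,u_xx,u_xy,u_yy, r being eliminated via Equation (E3); the identity is exactly the cross-derivative compatibility condition asserting that the system w_x = X, w_y = Y is a differential covering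 of Equation (E3).) -/
/-- Denominator `D(x,y,p,q,w) = w² − (q+x)w + xq − p − 2y` of the covering (13). -/
noncomputable def covD (x y p q w : ℝ) : ℝ := w ^ 2 - (q + x) * w + x * q - p - 2 * y

/-- `X = −w(w − q)/D` from the covering (13) of Equation (E3). -/
noncomputable def covX (x y p q w : ℝ) : ℝ := -(w * (w - q)) / covD x y p q w

/-- `Y = −w/D` from the covering (13) of Equation (E3). -/
noncomputable def covY (x y p q w : ℝ) : ℝ := -w / covD x y p q w

/-- Quotient rule for `-f/g` in `deriv` form. -/
theorem cov_deriv_aux {f g : ℝ → ℝ} {f' g' a : ℝ} (hf : HasDerivAt f f' a)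
    (hg : HasDerivAt g g' a) (h : g a ≠ 0) :
    deriv (fun z => -(f z) / g z) a = (-f' * g a + f a * g') / (g a) ^ 2 := by
  have := (hf.neg.div hg h).deriv
  refine Eq.trans this ?_
  simp only [Pi.neg_apply]
  ring

/-- Cross-derivative compatibility `D_y(X) = D_x(Y)` of the covering
`w_x = X`, `w_y = Y` over Equation (E3)
`u_xx = (x − u_y)·u_xy + (2y + u_x)·u_yy − u_y`, where `p,q,r,s,t` stand for
`u_x,u_y,u_xx,u_xy,u_yy` and `r = (x−q)·s + (2y+p)·t − q` is eliminated via (E3). -/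
theorem covering_E3_compatibility (x y p q s t w : ℝ)
    (hD : covD x y p q w ≠ 0) :
    deriv (fun y' => covX x y' p q w) y
      + deriv (fun p' => covX x y p' q w) p * s
      + deriv (fun q' => covX x y p q' w) q * t
      + deriv (fun w' => covX x y p q w') w * covY x y p q w
    = deriv (fun x' => covY x' y p q w) x
      + deriv (fun p' => covY x y p' q w) p * ((x - q) * s + (2 * y + p) * t - q)
      + deriv (fun q' => covY x y p q' w) q * s
      + deriv (fun w' => covY x y p q w') w * covX x y p q w := by
  have Dx : HasDerivAt (fun z => covD z y p q w) (q - w) x := by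
    unfold covD
    have h := hasDerivAt_id' x
    refine HasDerivAt.congr_deriv ((((((h.const_add q).mul_const w).const_sub (w ^ 2)).add (h.mul_const q)).sub_const p).sub_const (2 * y)) ?_
    ring
  have Dy : HasDerivAt (fun z => covD x z p q w) (-2) y := by
    unfold covD
    have h := hasDerivAt_id' y
    refine HasDerivAt.congr_deriv ((h.const_mul 2).const_sub (w ^ 2 - (q + x) * w + x * q - p)) ?_
    ring
  have Dp : HasDerivAt (fun z => covD x y z q w) (-1) p := by
    unfold covD
    have h := hasDerivAt_id' p
    refine HasDerivAt.congr_deriv ((h.const_sub (w ^ 2 - (q + x) * w + x * q)).sub_const (2 * y)) ?_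
    ring
  have Dq : HasDerivAt (fun z => covD x y p z w) (x - w) q := by
    unfold covD
    have h := hasDerivAt_id' q
    refine HasDerivAt.congr_deriv ((((((h.add_const x).mul_const w).const_sub (w ^ 2)).add (h.const_mul x)).sub_const p).sub_const (2 * y)) ?_
    ring
  have Dw : HasDerivAt (fun z => covD x y p q z) (2 * w - q - x) w := by
    unfold covD
    have h := hasDerivAt_id' w
    refine HasDerivAt.congr_deriv ((((((h.pow 2).sub (h.const_mul (q + x))).add_const (x * q)).sub_const p).sub_const (2 * y))) ?_
    ring
  have Nq : HasDerivAt (fun z => w * (w - z)) (-w) q := by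
    refine HasDerivAt.congr_deriv (((hasDerivAt_id' q).const_sub w).const_mul w) ?_
    ring
  have Nw : HasDerivAt (fun z => z * (z - q)) (2 * w - q) w := by
    refine HasDerivAt.congr_deriv
      ((hasDerivAt_id' w).mul ((hasDerivAt_id' w).sub_const q)) ?_
    ring
  have Xy := cov_deriv_aux (hasDerivAt_const y (w * (w - q))) Dy hD
  have Xp := cov_deriv_aux (hasDerivAt_const p (w * (w - q))) Dp hD
  have Xq := cov_deriv_aux Nq Dq hD
  have Xw := cov_deriv_aux Nw Dw hD
  have Yx := cov_deriv_aux (hasDerivAt_const x w) Dx hD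
  have Yp := cov_deriv_aux (hasDerivAt_const p w) Dp hD
  have Yq := cov_deriv_aux (hasDerivAt_const q w) Dq hD
  have Yw := cov_deriv_aux (hasDerivAt_id' w) Dw hD
  unfold covX covY
  rw [Xy, Xp, Xq, Xw, Yx, Yp, Yq, Yw]
  have hE : covD x y p q w = w ^ 2 - (q + x) * w + x * q - p - 2 * y := rfl
  have hp : p = w ^ 2 - (q + x) * w + x * q - 2 * y - covD x y p q w := by rw [hE]; ring
  generalize covD x y p q w = d at hD hp ⊢
  subst hp
  field_simp
  ring
end
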